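/- Let K be a field and p₁, p₂, p₃ ∈ K. The vector (1, p₁, p₂, p₃) lies in the osculating tangent ℓ(u₁,u₂) for some (u₁,u₂) ∈ K² if and only if p₃ − p₁p₂ + p₁³ is a cube in K; in that case, writing s ∈ K with s³ = p₃ − p₁p₂ + p₁³, one may take u₁ = p₁ − s and u₂ = p₂ − 3s(p₁ − s). -/

import Mathlib

/-- The Cayley cubic form `f(x₀,x₁,x₂,x₃) = x₀x₁x₂ − x₁³ − x₀²x₃`. -/
def cayleyF {K : Type*} [Field K] (x : Fin 4 → K) : K :=
  x 0 * x 1 * x 2 - (x 1) ^ 3 - (x 0) ^ 2 * x 3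

/-- The affine point `P(u₁,u₂)` of the Cayley surface. -/
def cayleyP (K : Type*) [Field K] (u₁ u₂ : K) : Fin 4 → K :=
  ![1, u₁, u₂, u₁ * u₂ - u₁ ^ 3]

/-- The direction vector `d(u₁,u₂) = (0,1,3u₁,u₂)`. -/
def cayleyD (K : Type*) [Field K] (u₁ u₂ : K) : Fin 4 → K :=
  ![0, 1, 3 * u₁, u₂]

/-- The osculating tangent `ℓ(u₁,u₂) = span{P(u₁,u₂), d(u₁,u₂)}`. -/
def oscTang (K : Type*) [Field K] (u₁ u₂ : K) : Submodule K (Fin 4 → K) :=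
  Submodule.span K {cayleyP K u₁ u₂, cayleyD K u₁ u₂}

/-- The line `g∞ = span{(0,0,1,0), (0,0,0,1)}`. -/
def gInf (K : Type*) [Field K] : Submodule K (Fin 4 → K) :=
  Submodule.span K {![0, 0, 1, 0], ![0, 0, 0, 1]}

/-- The Betten–Walker line set `O`: all osculating tangents together with `g∞`. -/
def BWset (K : Type*) [Field K] : Set (Submodule K (Fin 4 → K)) :=
  {ℓ | ∃ u₁ u₂ : K, ℓ = oscTang K u₁ u₂} ∪ {gInf K}

/-!
The restriction of the Cayley form to an osculating tangent is `f(a P + b d) = -b³`: the tangent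
meets `F` only at `P`, with multiplicity three. Off the plane `x₀ = 0`, the form `f` is affine in
`x₃` with invertible leading coefficient, so a vector is determined by `x₀, x₁, x₂` and its value
under `f`. Since `x = a P + b d` forces `a = x₀` and `b = x₁ - x₀u₁`, membership in the tangent
amounts to a linear condition on `x₂`, which determines `u₂`, together with `f(x) = -b³`.
-/

section

variable {K : Type*} [Field K]

lemma mem_oscTang_iff_eq_smul_add_smul {u₁ u₂ : K} {x : Fin 4 → K} :
    x ∈ oscTang K u₁ u₂ ↔
      x = x 0 • cayleyP K u₁ u₂ + (x 1 - x 0 * u₁) • cayleyD K u₁ u₂ := by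
  rw [oscTang, Submodule.mem_span_pair]
  constructor
  · rintro ⟨a, b, rfl⟩
    simp [cayleyP, cayleyD]
  · exact fun hx ↦ ⟨_, _, hx.symm⟩

lemma cayleyF_smul_cayleyP_add_smul_cayleyD (u₁ u₂ a b : K) :
    cayleyF (a • cayleyP K u₁ u₂ + b • cayleyD K u₁ u₂) = -b ^ 3 := by
  simp only [cayleyF, cayleyP, cayleyD, Pi.add_apply, Pi.smul_apply, smul_eq_mul, Matrix.cons_val]
  ring

lemma eq_of_cayleyF_eq {x y : Fin 4 → K} (hx : x 0 ≠ 0) (h₀ : x 0 = y 0) (h₁ : x 1 = y 1)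
    (h₂ : x 2 = y 2) (hF : cayleyF x = cayleyF y) : x = y := by
  have h₃ : x 3 = y 3 := by
    simpa [cayleyF, ← h₀, ← h₁, ← h₂, hx] using hF
  ext i
  fin_cases i <;> assumption

lemma mem_oscTang_iff_cayleyF_eq {u₁ u₂ : K} {x : Fin 4 → K} (hx : x 0 ≠ 0) :
    x ∈ oscTang K u₁ u₂ ↔
      x 2 = x 0 * u₂ + 3 * (x 1 - x 0 * u₁) * u₁ ∧ cayleyF x = -(x 1 - x 0 * u₁) ^ 3 := by
  set y := x 0 • cayleyP K u₁ u₂ + (x 1 - x 0 * u₁) • cayleyD K u₁ u₂ with hy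
  have hy₀ : y 0 = x 0 := by simp [hy, cayleyP, cayleyD]
  have hy₁ : y 1 = x 1 := by simp [hy, cayleyP, cayleyD]
  have hy₂ : y 2 = x 0 * u₂ + 3 * (x 1 - x 0 * u₁) * u₁ := by
    simp only [hy, cayleyP, cayleyD, Pi.add_apply, Pi.smul_apply, smul_eq_mul, Matrix.cons_val]
    ring
  have hyF : cayleyF y = -(x 1 - x 0 * u₁) ^ 3 :=
    cayleyF_smul_cayleyP_add_smul_cayleyD ..
  rw [mem_oscTang_iff_eq_smul_add_smul, ← hy, ← hy₂, ← hyF]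
  exact ⟨fun h ↦ ⟨congrFun h 2, congrArg cayleyF h⟩,
    fun h ↦ eq_of_cayleyF_eq hx hy₀.symm hy₁.symm h.1 h.2⟩

lemma affine_mem_oscTang_iff {u₁ u₂ p₁ p₂ p₃ : K} :
    (![1, p₁, p₂, p₃] : Fin 4 → K) ∈ oscTang K u₁ u₂ ↔
      u₂ = p₂ - 3 * (p₁ - u₁) * u₁ ∧ (p₁ - u₁) ^ 3 = p₃ - p₁ * p₂ + p₁ ^ 3 := by
  have hF : cayleyF ![1, p₁, p₂, p₃] = -(p₃ - p₁ * p₂ + p₁ ^ 3) := by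
    simp only [cayleyF, Matrix.cons_val]
    ring
  rw [mem_oscTang_iff_cayleyF_eq (by simp), hF, neg_inj, eq_sub_iff_add_eq]
  simp only [Matrix.cons_val, one_mul, eq_comm]

end

/-- the vector `(1,p₁,p₂,p₃)` lies on some osculating tangent
`ℓ(u₁,u₂)` iff `p₃ − p₁p₂ + p₁³` is a cube in `K`; and for any cube root `s` of
`p₃ − p₁p₂ + p₁³` one may take `u₁ = p₁ − s`, `u₂ = p₂ − 3s(p₁ − s)`. -/
theorem bw_affine_point_on_oscTang_iff (K : Type*) [Field K] (p₁ p₂ p₃ : K) :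
    ((∃ u₁ u₂ : K, (![1, p₁, p₂, p₃] : Fin 4 → K) ∈ oscTang K u₁ u₂) ↔
        ∃ s : K, s ^ 3 = p₃ - p₁ * p₂ + p₁ ^ 3) ∧
      (∀ s : K, s ^ 3 = p₃ - p₁ * p₂ + p₁ ^ 3 →
        (![1, p₁, p₂, p₃] : Fin 4 → K) ∈
          oscTang K (p₁ - s) (p₂ - 3 * s * (p₁ - s))) := by
  have mem_of_cube (s : K) (hs : s ^ 3 = p₃ - p₁ * p₂ + p₁ ^ 3) :
      (![1, p₁, p₂, p₃] : Fin 4 → K) ∈ oscTang K (p₁ - s) (p₂ - 3 * s * (p₁ - s)) := by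
    rw [affine_mem_oscTang_iff, sub_sub_cancel]
    exact ⟨rfl, hs⟩
  refine ⟨⟨?_, fun ⟨s, hs⟩ ↦ ⟨_, _, mem_of_cube s hs⟩⟩, mem_of_cube⟩
  rintro ⟨u₁, u₂, hp⟩
  exact ⟨p₁ - u₁, (affine_mem_oscTang_iff.mp hp).2⟩
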